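/- Let G be a graph, S a label assignment on G, and N a nonnegative integer. Let P = R_{≤N} be the set of vertices having a relevant label at most N, and let P̄ be the set obtained from P by deleting both endpoints of every edge of G whose two endpoints have equal relevant labels. Then the subgraph of G induced by P̄ is acyclic (a forest). -/

import Mathlib

open MeasureTheory ProbabilityTheory Filter Set

namespace InducedForest

variable {V : Type*}

/-- Label `i` is *relevant* for vertex `v` (w.r.t. the label assignment `S`):
either `i = 0` and `0 ∈ S v`, or `i ∈ S v`, no `j < i` is relevant for `v`, and
there is a unique neighbour of `v` having a relevant label strictly smaller than `i`. -/
def Relevant (G : SimpleGraph V) (S : V → Set ℕ) (i : ℕ) : V → Prop :=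
  Nat.strongRecOn i (fun i ih v =>
    (i = 0 ∧ 0 ∈ S v) ∨
    (i ∈ S v ∧ (∀ j, (h : j < i) → ¬ ih j h v) ∧
      (∃! u, G.Adj v u ∧ ∃ j, ∃ h : j < i, ih j h u)))

/-- `v` has some relevant label `≤ l`, i.e. `v ∈ R_{≤ l}`. -/
def RelevantLe (G : SimpleGraph V) (S : V → Set ℕ) (l : ℕ) (v : V) : Prop :=
  ∃ i ≤ l, Relevant G S i v

inductive Colour | white | blue | orange | purple
deriving DecidableEq

open Classical in
/-- The colour of `u` at time `l`. -/
noncomputable def colourAt (G : SimpleGraph V) (S : V → Set ℕ) (l : ℕ) (u : V) : Colour :=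
  if RelevantLe G S l u then Colour.purple
  else if ∀ v, G.Adj u v → ¬ RelevantLe G S l v then Colour.white
  else if ∃! v, G.Adj u v ∧ RelevantLe G S l v then Colour.blue
  else Colour.orange

/-- The set `W_l` of white vertices at time `l`. -/
def White (G : SimpleGraph V) (S : V → Set ℕ) (l : ℕ) : Set V :=
  {u | ¬ RelevantLe G S l u ∧ ∀ v, G.Adj u v → ¬ RelevantLe G S l v}

/-- The set `B_l` of blue vertices at time `l`. -/
def Blue (G : SimpleGraph V) (S : V → Set ℕ) (l : ℕ) : Set V :=
  {u | ¬ RelevantLe G S l u ∧ ∃! v, G.Adj u v ∧ RelevantLe G S l v}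
/-- The set `P̄`: vertices with a relevant label `≤ N`, with both endpoints of every edge
whose two endpoints have equal relevant labels deleted. -/
def Pbar (G : SimpleGraph V) (S : V → Set ℕ) (N : ℕ) : Set V :=
  {v | RelevantLe G S N v ∧
    ∀ x, G.Adj v x → ∀ i, Relevant G S i v → ¬ Relevant G S i x}

/-!
A vertex whose relevant label comes from rule (II) has exactly one neighbour of smaller relevant
label, and one whose label comes from rule (I) has none, its label being `0`. If adjacent labels are
distinct along a cycle, then a vertex of maximal label on it has two such neighbours, namely its
neighbours in the cycle. Among the labelled vertices only edges with equal labels obstruct this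
argument, so it is enough to delete these edges instead of their endpoints.
-/

theorem isAcyclic_of_subsingleton_adj_le {α : Type*} [LinearOrder α] {H : SimpleGraph V}
    (f : V → α) (hf : ∀ v, {w | H.Adj v w ∧ f w ≤ f v}.Subsingleton) : H.IsAcyclic := by
  classical
  intro u c hc
  obtain ⟨m, hm, hmax⟩ :=
    Set.exists_max_image {v | v ∈ c.support} f c.support.finite_toSet ⟨u, c.start_mem_support⟩
  have hcm : (c.rotate m hm).IsCycle := hc.rotate hm
  have le_max {w : V} (hw : w ∈ (c.rotate m hm).support) : f w ≤ f m :=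
    hmax w ((c.mem_support_rotate_iff m hm).1 hw)
  exact hcm.snd_ne_penultimate <| hf m
    ⟨SimpleGraph.Walk.adj_snd hcm.not_nil, le_max (SimpleGraph.Walk.getVert_mem_support _ _)⟩
    ⟨(SimpleGraph.Walk.adj_penultimate hcm.not_nil).symm,
      le_max (SimpleGraph.Walk.getVert_mem_support _ _)⟩

section Labels

variable {G : SimpleGraph V} {S : V → Set ℕ} {i j : ℕ} {v : V}

theorem relevant_iff :
    Relevant G S i v ↔ (i = 0 ∧ 0 ∈ S v) ∨
      (i ∈ S v ∧ (∀ j < i, ¬ Relevant G S j v) ∧ ∃! u, G.Adj v u ∧ ∃ j < i, Relevant G S j u) := by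
  -- In the recursive definition, the proof of `j < i` is an argument of the recursive call.
  simp only [← exists_prop (a := _ < i)]
  unfold Relevant
  rw [Nat.strongRecOn_eq]

theorem Relevant.not_relevant_of_lt (hi : Relevant G S i v) (hji : j < i) :
    ¬ Relevant G S j v := by
  rcases relevant_iff.1 hi with ⟨rfl, _⟩ | ⟨_, hmin, _⟩
  · exact absurd hji j.not_lt_zero
  · exact hmin j hji

theorem Relevant.unique (hi : Relevant G S i v) (hj : Relevant G S j v) : i = j :=
  le_antisymm (not_lt.1 fun hji => hi.not_relevant_of_lt hji hj)
    (not_lt.1 fun hij => hj.not_relevant_of_lt hij hi)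

theorem Relevant.subsingleton_adj_lt (hi : Relevant G S i v) :
    {u | G.Adj v u ∧ ∃ j < i, Relevant G S j u}.Subsingleton := by
  rcases relevant_iff.1 hi with ⟨rfl, _⟩ | ⟨_, _, hunique⟩
  · rintro _ ⟨_, j, hj, _⟩
    exact absurd hj j.not_lt_zero
  · exact fun _ ha _ hb => hunique.unique ha hb

end Labels

/-- The spanning subgraph of `G` formed by the edges whose endpoints have distinct relevant labels.
An edge with an endpoint that has no relevant label is dropped as well. -/
def distinctLabelGraph (G : SimpleGraph V) (S : V → Set ℕ) : SimpleGraph V where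
  Adj v w := G.Adj v w ∧ ∃ i j, i ≠ j ∧ Relevant G S i v ∧ Relevant G S j w
  symm := ⟨fun _ _ ⟨hvw, i, j, hij, hi, hj⟩ => ⟨hvw.symm, j, i, hij.symm, hj, hi⟩⟩
  loopless := ⟨fun _ h => h.1.ne rfl⟩

theorem pbar_induces_forest_general (G : SimpleGraph V) (S : V → Set ℕ) :
    (distinctLabelGraph G S).IsAcyclic := by
  choose! label relevant_label using fun v (h : ∃ i, Relevant G S i v) => h
  refine isAcyclic_of_subsingleton_adj_le label fun v a ha b hb => ?_
  have hv : Relevant G S (label v) v :=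
    let ⟨⟨_, i, _, _, hi, _⟩, _⟩ := ha
    relevant_label v ⟨i, hi⟩
  have lower {w : V} (hw : (distinctLabelGraph G S).Adj v w ∧ label w ≤ label v) :
      G.Adj v w ∧ ∃ j < label v, Relevant G S j w := by
    obtain ⟨⟨hvw, i, j, hij, hi, hj⟩, hle⟩ := hw
    have hw' : Relevant G S (label w) w := relevant_label w ⟨j, hj⟩
    have hne : label w ≠ label v := by
      rw [hw'.unique hj, hv.unique hi]
      exact hij.symm
    exact ⟨hvw, label w, lt_of_le_of_ne hle hne, hw'⟩
  exact hv.subsingleton_adj_lt (lower ha) (lower hb)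

theorem induce_pbar_le_induce_distinctLabelGraph (G : SimpleGraph V) (S : V → Set ℕ) (N : ℕ) :
    G.induce (Pbar G S N) ≤ (distinctLabelGraph G S).induce (Pbar G S N) := by
  rintro ⟨v, ⟨i, _, hi⟩, hv⟩ ⟨w, ⟨j, _, hj⟩, _⟩ (hvw : G.Adj v w)
  refine ⟨hvw, i, j, ?_, hi, hj⟩
  rintro rfl
  exact hv w hvw i hi hj

/-- The subgraph induced by `P̄` is acyclic. -/
theorem pbar_induces_forest
    (G : SimpleGraph V) (S : V → Set ℕ) (N : ℕ) :
    (G.induce (Pbar G S N)).IsAcyclic :=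
  ((pbar_induces_forest_general G S).induce _).anti
    (induce_pbar_le_induce_distinctLabelGraph G S N)

end InducedForest
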